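/- The n-harmonic product *̄ on H^1 is commutative and associative: for all w1, w2, w3 ∈ H^1 one has w1 *̄ w2 = w2 *̄ w1 and (w1 *̄ w2) *̄ w3 = w1 *̄ (w2 *̄ w3). -/

import Mathlib

open scoped BigOperators

/-- The two-letter alphabet {x, y}. -/
inductive Letter : Type
  | x : Letter
  | y : Letter
deriving DecidableEq

/-- `H = ℚ⟨x,y⟩`, the noncommutative polynomial ring over ℚ in two
indeterminates, realized as the monoid algebra of the free monoid on `{x,y}`. -/
abbrev H : Type := MonoidAlgebra ℚ (FreeMonoid Letter)

namespace H

/-- The monomial (word) of `H` corresponding to an element of the free monoid. -/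
noncomputable def word (w : FreeMonoid Letter) : H := MonoidAlgebra.single w 1

/-- The generator `x`. -/
noncomputable def X : H := word (FreeMonoid.of Letter.x)

/-- The generator `y`. -/
noncomputable def Y : H := word (FreeMonoid.of Letter.y)

/-- The word `z_k = x^{k-1} y` (for `k ≥ 1`). -/
def zW (k : ℕ) : FreeMonoid Letter :=
  FreeMonoid.ofList (List.replicate (k - 1) Letter.x ++ [Letter.y])

/-- `z_k = x^{k-1} y` as an element of `H`. -/
noncomputable def z (k : ℕ) : H := word (zW k)

/-- A list `[k₁,…,kₙ]` gives the word `z_{k₁} z_{k₂} ⋯ z_{kₙ}`. -/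
def zListW (ks : List ℕ) : FreeMonoid Letter :=
  FreeMonoid.ofList (ks.flatMap fun k => List.replicate (k - 1) Letter.x ++ [Letter.y])

/-- `H¹ = ℚ + Hy` as a ℚ-submodule of `H`. -/
noncomputable def H1 : Submodule ℚ H :=
  LinearMap.range (LinearMap.mulRight ℚ Y) ⊔ Submodule.span ℚ {1}

/-- `H⁰ = ℚ + xHy` as a ℚ-submodule of `H`. -/
noncomputable def H0 : Submodule ℚ H :=
  LinearMap.range ((LinearMap.mulRight ℚ Y).comp (LinearMap.mulLeft ℚ X)) ⊔
    Submodule.span ℚ {1}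

/-- Parse a word of `H¹` into the exponent list of its `z`-decomposition:
`z_{k₁}⋯z_{kₙ} ↦ [k₁,…,kₙ]` (auxiliary accumulator version). -/
def toZAux : List Letter → ℕ → List ℕ
  | [], _ => []
  | Letter.x :: r, n => toZAux r (n + 1)
  | Letter.y :: r, n => (n + 1) :: toZAux r 0

/-- The `z`-decomposition of a word of `H¹`. -/
def toZ (w : FreeMonoid Letter) : List ℕ := toZAux (FreeMonoid.toList w) 0

/-- The harmonic product on words of `H¹` (via `z`-decompositions):
`1 * w = w * 1 = w` and
`z_k w₁ * z_l w₂ = z_k (w₁ * z_l w₂) + z_l (z_k w₁ * w₂) + z_{k+l} (w₁ * w₂)`. -/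
noncomputable def harmW : List ℕ → List ℕ → H
  | [], w => word (zListW w)
  | k :: w1, [] => word (zListW (k :: w1))
  | k :: w1, l :: w2 =>
      z k * harmW w1 (l :: w2) + z l * harmW (k :: w1) w2 + z (k + l) * harmW w1 w2
termination_by w1 w2 => w1.length + w2.length
decreasing_by all_goals simp [Nat.lt_succ_iff] <;> omega

/-- The n-harmonic product on words of `H¹`:
`1 *̄ w = w *̄ 1 = w` and
`z_k w₁ *̄ z_l w₂ = z_k (w₁ *̄ z_l w₂) + z_l (z_k w₁ *̄ w₂) − z_{k+l} (w₁ *̄ w₂)`. -/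
noncomputable def nharmW : List ℕ → List ℕ → H
  | [], w => word (zListW w)
  | k :: w1, [] => word (zListW (k :: w1))
  | k :: w1, l :: w2 =>
      z k * nharmW w1 (l :: w2) + z l * nharmW (k :: w1) w2 - z (k + l) * nharmW w1 w2
termination_by w1 w2 => w1.length + w2.length
decreasing_by all_goals simp [Nat.lt_succ_iff] <;> omega

/-- The harmonic product `*` on `H¹`, extended ℚ-bilinearly. -/
noncomputable def harm (a b : H) : H :=
  Finsupp.sum a.coeff fun w1 c1 =>
    Finsupp.sum b.coeff fun w2 c2 => (c1 * c2) • harmW (toZ w1) (toZ w2)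

/-- The n-harmonic product `*̄` on `H¹`, extended ℚ-bilinearly. -/
noncomputable def nharm (a b : H) : H :=
  Finsupp.sum a.coeff fun w1 c1 =>
    Finsupp.sum b.coeff fun w2 c2 => (c1 * c2) • nharmW (toZ w1) (toZ w2)

/-- The letter exchange `τ(x) = y`, `τ(y) = x`. -/
def τ : Letter → Letter
  | Letter.x => Letter.y
  | Letter.y => Letter.x

/-- `δ(w) = 1` if `w` is the empty word, `0` otherwise. -/
def δ : List Letter → ℚ
  | [] => 1
  | _ :: _ => 0

/-- The shuffle product on words:
`1 ш w = w ш 1 = w` and `u₁w₁ ш u₂w₂ = u₁(w₁ ш u₂w₂) + u₂(u₁w₁ ш w₂)`. -/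
noncomputable def shW : List Letter → List Letter → H
  | [], w => word (FreeMonoid.ofList w)
  | u :: w, [] => word (FreeMonoid.ofList (u :: w))
  | u1 :: w1, u2 :: w2 =>
      word (FreeMonoid.of u1) * shW w1 (u2 :: w2) +
        word (FreeMonoid.of u2) * shW (u1 :: w1) w2
termination_by w1 w2 => w1.length + w2.length
decreasing_by all_goals simp [Nat.lt_succ_iff]

/-- The n-shuffle product on words: `1 ш̄ w = w ш̄ 1 = w` and
`u₁w₁ ш̄ u₂w₂ = u₁(w₁ ш̄ u₂w₂) + u₂(u₁w₁ ш̄ w₂) − δ(w₁)τ(u₁)u₂w₂ − δ(w₂)τ(u₂)u₁w₁`. -/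
noncomputable def nshW : List Letter → List Letter → H
  | [], w => word (FreeMonoid.ofList w)
  | u :: w, [] => word (FreeMonoid.ofList (u :: w))
  | u1 :: w1, u2 :: w2 =>
      word (FreeMonoid.of u1) * nshW w1 (u2 :: w2) +
        word (FreeMonoid.of u2) * nshW (u1 :: w1) w2 -
        δ w1 • word (FreeMonoid.ofList (τ u1 :: u2 :: w2)) -
        δ w2 • word (FreeMonoid.ofList (τ u2 :: u1 :: w1))
termination_by w1 w2 => w1.length + w2.length
decreasing_by all_goals simp [Nat.lt_succ_iff]

/-- The shuffle product `ш` on `H`, extended ℚ-bilinearly. -/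
noncomputable def sh (a b : H) : H :=
  Finsupp.sum a.coeff fun w1 c1 =>
    Finsupp.sum b.coeff fun w2 c2 =>
      (c1 * c2) • shW (FreeMonoid.toList w1) (FreeMonoid.toList w2)

/-- The n-shuffle product `ш̄` on `H`, extended ℚ-bilinearly. -/
noncomputable def nsh (a b : H) : H :=
  Finsupp.sum a.coeff fun w1 c1 =>
    Finsupp.sum b.coeff fun w2 c2 =>
      (c1 * c2) • nshW (FreeMonoid.toList w1) (FreeMonoid.toList w2)

/-- `S₁`: the ℚ-algebra endomorphism of `H` with `S₁(x) = x`, `S₁(y) = x + y`. -/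
noncomputable def S1 : H →ₐ[ℚ] H :=
  MonoidAlgebra.lift ℚ H (FreeMonoid Letter)
    (FreeMonoid.lift fun u => match u with
      | Letter.x => X
      | Letter.y => X + Y)

/-- `S₂`: the ℚ-algebra endomorphism of `H` with `S₂(x) = x`, `S₂(y) = y − x`. -/
noncomputable def S2 : H →ₐ[ℚ] H :=
  MonoidAlgebra.lift ℚ H (FreeMonoid Letter)
    (FreeMonoid.lift fun u => match u with
      | Letter.x => X
      | Letter.y => Y - X)

/-- `S` on a word: `S(1) = 1` and `S(Fy) = S₁(F)y`. -/
noncomputable def SW (w : FreeMonoid Letter) : H :=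
  match (FreeMonoid.toList w).getLast? with
  | some Letter.y =>
      S1 (word (FreeMonoid.ofList (FreeMonoid.toList w).dropLast)) * Y
  | _ => word w

/-- The ℚ-linear map `S : H¹ → H¹` with `S(1) = 1`, `S(Fy) = S₁(F)y`. -/
noncomputable def S (a : H) : H := Finsupp.sum a.coeff fun w c => c • SW w

/-- `S̃` on a word: `S̃(1) = 1` and `S̃(Fy) = S₂(F)y`. -/
noncomputable def StW (w : FreeMonoid Letter) : H :=
  match (FreeMonoid.toList w).getLast? with
  | some Letter.y =>
      S2 (word (FreeMonoid.ofList (FreeMonoid.toList w).dropLast)) * Y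
  | _ => word w

/-- The ℚ-linear map `S̃ : H¹ → H¹` with `S̃(1) = 1`, `S̃(Fy) = S₂(F)y`. -/
noncomputable def St (a : H) : H := Finsupp.sum a.coeff fun w c => c • StW w

/-- The multiple zeta value `ζ(k₁,…,kₙ)`: the sum over strictly decreasing
tuples `m₁ > m₂ > ⋯ > mₙ > 0` of `1/(m₁^{k₁}⋯mₙ^{kₙ})`. -/
noncomputable def mzeta (ks : List ℕ) : ℝ :=
  ∑' m : {f : Fin ks.length → ℕ // (∀ i, 0 < f i) ∧
      ∀ i j : Fin ks.length, i < j → f j < f i},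
    ∏ i : Fin ks.length, ((m.1 i : ℝ) ^ ks.get i)⁻¹

/-- The non-strict multiple zeta value `ζ̄(k₁,…,kₙ)`: the sum over weakly
decreasing tuples `m₁ ≥ m₂ ≥ ⋯ ≥ mₙ > 0` of `1/(m₁^{k₁}⋯mₙ^{kₙ})`. -/
noncomputable def nmzeta (ks : List ℕ) : ℝ :=
  ∑' m : {f : Fin ks.length → ℕ // (∀ i, 0 < f i) ∧
      ∀ i j : Fin ks.length, i ≤ j → f j ≤ f i},
    ∏ i : Fin ks.length, ((m.1 i : ℝ) ^ ks.get i)⁻¹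

/-- The evaluation map `Z : H⁰ → ℝ`, `Z(1) = 1`,
`Z(z_{k₁}⋯z_{kₙ}) = ζ(k₁,…,kₙ)` (extended ℚ-linearly to `H`). -/
noncomputable def Z (a : H) : ℝ := Finsupp.sum a.coeff fun w c => (c : ℝ) * mzeta (toZ w)

/-- The n-evaluation map `Z̄ : H⁰ → ℝ`, `Z̄(1) = 1`,
`Z̄(z_{k₁}⋯z_{kₙ}) = ζ̄(k₁,…,kₙ)` (extended ℚ-linearly to `H`). -/
noncomputable def Zbar (a : H) : ℝ := Finsupp.sum a.coeff fun w c => (c : ℝ) * nmzeta (toZ w)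

/-- `i`-fold n-harmonic power: `a^{*̄ 0} = 1`, `a^{*̄ (i+1)} = a *̄ a^{*̄ i}`. -/
noncomputable def nharmPow : ℕ → H → H
  | 0, _ => 1
  | i + 1, a => nharm a (nharmPow i a)

/-- `i`-fold n-shuffle power: `a^{ш̄ 0} = 1`, `a^{ш̄ (i+1)} = a ш̄ a^{ш̄ i}`. -/
noncomputable def nshPow : ℕ → H → H
  | 0, _ => 1
  | i + 1, a => nsh a (nshPow i a)

end H



namespace H

theorem toZAux_replicate (m n : ℕ) (r : List Letter) :
    toZAux (List.replicate m Letter.x ++ Letter.y :: r) n = (n + m + 1) :: toZAux r 0 := by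
  induction m generalizing n with
  | zero => simp [toZAux]
  | succ m ih =>
    simp only [List.replicate_succ, List.cons_append, toZAux, ih]
    congr 1
    omega

theorem toZAux_pos (r : List Letter) (n : ℕ) : ∀ k ∈ toZAux r n, 1 ≤ k := by
  induction r generalizing n with
  | nil => simp [toZAux]
  | cons a r ih =>
    cases a with
    | x => simpa [toZAux] using ih (n + 1)
    | y => simpa [toZAux] using ih 0

theorem toZ_pos (w : FreeMonoid Letter) : ∀ k ∈ toZ w, 1 ≤ k := toZAux_pos _ _

theorem toZ_zW_mul (k : ℕ) (hk : 1 ≤ k) (w : FreeMonoid Letter) :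
    toZ (zW k * w) = k :: toZ w := by
  have := toZAux_replicate (k - 1) 0 (FreeMonoid.toList w)
  simp only [toZ, zW, FreeMonoid.toList_mul, FreeMonoid.toList_ofList, List.append_assoc,
    List.singleton_append, this]
  congr 1
  omega

theorem zListW_cons (k : ℕ) (a : List ℕ) : zListW (k :: a) = zW k * zListW a := by
  simp [zListW, zW, ← FreeMonoid.ofList_append]

theorem toZ_zListW (a : List ℕ) (ha : ∀ k ∈ a, 1 ≤ k) : toZ (zListW a) = a := by
  induction a with
  | nil => rfl
  | cons k a ih =>
    rw [zListW_cons, toZ_zW_mul k (ha k (by simp)), ih (fun j hj => ha j (by simp [hj]))]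

theorem word_mul (u v : FreeMonoid Letter) : word (u * v) = word u * word v := by
  simp [word, MonoidAlgebra.single_mul_single]

theorem word_cons (k : ℕ) (a : List ℕ) : word (zListW (k :: a)) = z k * word (zListW a) := by
  rw [zListW_cons, word_mul, z]

theorem nharm_add_left (a b c : H) : nharm (a + b) c = nharm a c + nharm b c := by
  unfold nharm
  rw [MonoidAlgebra.coeff_add, Finsupp.sum_add_index']
  · intro w; simp
  · intro w c1 c2; simp [add_mul, add_smul, Finsupp.sum_add]

theorem nharm_add_right (a b c : H) : nharm a (b + c) = nharm a b + nharm a c := by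
  unfold nharm
  rw [← Finsupp.sum_add]
  congr 1
  funext w c1
  rw [MonoidAlgebra.coeff_add, Finsupp.sum_add_index']
  · intro w; simp
  · intro w c1 c2; simp [mul_add, add_smul]

theorem nharm_smul_left (r : ℚ) (a c : H) : nharm (r • a) c = r • nharm a c := by
  unfold nharm
  rw [MonoidAlgebra.coeff_smul, Finsupp.sum_smul_index', Finsupp.smul_sum]
  · simp [Finsupp.smul_sum, mul_smul]
  · intro w; simp

theorem nharm_smul_right (r : ℚ) (a c : H) : nharm a (r • c) = r • nharm a c := by
  unfold nharm
  rw [Finsupp.smul_sum]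
  congr 1
  funext w c1
  rw [MonoidAlgebra.coeff_smul, Finsupp.sum_smul_index', Finsupp.smul_sum]
  · simp only [smul_smul, smul_eq_mul, mul_left_comm]
  · intro w; simp

theorem nharm_word (u v : FreeMonoid Letter) :
    nharm (word u) (word v) = nharmW (toZ u) (toZ v) := by
  simp [nharm, word]

theorem nharm_sub_left (a b c : H) : nharm (a - b) c = nharm a c - nharm b c := by
  rw [eq_sub_iff_add_eq, ← nharm_add_left, sub_add_cancel]

theorem nharm_sub_right (a b c : H) : nharm a (b - c) = nharm a b - nharm a c := by
  rw [eq_sub_iff_add_eq, ← nharm_add_right, sub_add_cancel]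

theorem word_induction {p : H → Prop} (f : H) (hw : ∀ w, p (word w))
    (hadd : ∀ a b, p a → p b → p (a + b)) (hsmul : ∀ (r : ℚ) a, p a → p (r • a)) : p f := by
  induction f using MonoidAlgebra.induction_linear with
  | zero => simpa using hsmul 0 _ (hw 1)
  | add a b ha hb => exact hadd a b ha hb
  | single w r => simpa [word] using hsmul r _ (hw w)

theorem nharm_z_z (k l : ℕ) (hk : 1 ≤ k) (hl : 1 ≤ l) (P Q : H) :
    nharm (z k * P) (z l * Q) =
      z k * nharm P (z l * Q) + z l * nharm (z k * P) Q - z (k + l) * nharm P Q := by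
  induction P using word_induction with
  | hw u =>
    induction Q using word_induction with
    | hw v =>
      simp only [z, ← word_mul, nharm_word, toZ_zW_mul k hk, toZ_zW_mul l hl]
      rw [nharmW]
      rfl
    | hadd a b ha hb => simp only [mul_add, nharm_add_right, ha, hb]; abel
    | hsmul r a ha =>
      simp only [mul_smul_comm, nharm_smul_right, ha, smul_add, smul_sub]
  | hadd a b ha hb => simp only [mul_add, nharm_add_left, ha, hb]; abel
  | hsmul r a ha =>
    simp only [mul_smul_comm, nharm_smul_left, ha, smul_add, smul_sub]

theorem nharmW_comm (a b : List ℕ) : nharmW a b = nharmW b a := by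
  induction a generalizing b with
  | nil => cases b <;> simp [nharmW]
  | cons k a iha =>
    induction b with
    | nil => simp [nharmW]
    | cons l b ihb =>
      rw [nharmW, nharmW, iha (l :: b), ihb, iha b, Nat.add_comm k l]
      abel

theorem nharm_comm' (P Q : H) : nharm P Q = nharm Q P := by
  induction P using word_induction with
  | hw u =>
    induction Q using word_induction with
    | hw v => rw [nharm_word, nharm_word, nharmW_comm]
    | hadd a b ha hb => rw [nharm_add_right, nharm_add_left, ha, hb]
    | hsmul r a ha => rw [nharm_smul_right, nharm_smul_left, ha]
  | hadd a b ha hb => rw [nharm_add_right, nharm_add_left, ha, hb]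
  | hsmul r a ha => rw [nharm_smul_right, nharm_smul_left, ha]

theorem nharm_one_z (k : ℕ) (hk : 1 ≤ k) (Q : H) :
    nharm (word 1) (z k * Q) = z k * nharm (word 1) Q := by
  induction Q using word_induction with
  | hw v =>
    have h1 : toZ 1 = [] := rfl
    simp only [z, ← word_mul, nharm_word, toZ_zW_mul k hk, h1]
    rw [nharmW, nharmW, word_cons, z]
  | hadd a b ha hb => simp only [mul_add, nharm_add_right, ha, hb]
  | hsmul r a ha => simp only [mul_smul_comm, nharm_smul_right, ha]

theorem nharm_A (a b : List ℕ) (ha : ∀ k ∈ a, 1 ≤ k) (hb : ∀ k ∈ b, 1 ≤ k) :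
    nharm (word (zListW a)) (word (zListW b)) = nharmW a b := by
  rw [nharm_word, toZ_zListW a ha, toZ_zListW b hb]

theorem nharm_one_A (a : List ℕ) (ha : ∀ k ∈ a, 1 ≤ k) :
    nharm (word 1) (word (zListW a)) = word (zListW a) := by
  rw [nharm_word, toZ_zListW a ha]
  show nharmW [] a = _
  rw [nharmW]

theorem nharm_one_nharmW (a b : List ℕ) (ha : ∀ k ∈ a, 1 ≤ k) (hb : ∀ k ∈ b, 1 ≤ k) :
    nharm (word 1) (nharmW a b) = nharmW a b := by
  induction a generalizing b with
  | nil => rw [nharmW, nharm_one_A b hb]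
  | cons k a iha =>
    have hk := ha k (by simp)
    have ha' : ∀ j ∈ a, 1 ≤ j := fun j hj => ha j (by simp [hj])
    induction b with
    | nil => rw [nharmW, nharm_one_A _ ha]
    | cons l b ihb =>
      have hl := hb l (by simp)
      have hb' : ∀ j ∈ b, 1 ≤ j := fun j hj => hb j (by simp [hj])
      rw [nharmW, nharm_sub_right, nharm_add_right, nharm_one_z k hk, nharm_one_z l hl,
        nharm_one_z (k + l) (by omega), iha _ ha' hb, ihb hb', iha _ ha' hb']

theorem assoc_step (k l m : ℕ) (hk : 1 ≤ k) (hl : 1 ≤ l) (hm : 1 ≤ m) (P Q R : H)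
    (h1 : nharm (nharm P (z l * Q)) (z m * R) = nharm P (nharm (z l * Q) (z m * R)))
    (h2 : nharm (nharm (z k * P) Q) (z m * R) = nharm (z k * P) (nharm Q (z m * R)))
    (h3 : nharm (nharm (z k * P) (z l * Q)) R = nharm (z k * P) (nharm (z l * Q) R))
    (h4 : nharm (nharm P Q) (z m * R) = nharm P (nharm Q (z m * R)))
    (h5 : nharm (nharm P (z l * Q)) R = nharm P (nharm (z l * Q) R))
    (h6 : nharm (nharm (z k * P) Q) R = nharm (z k * P) (nharm Q R))
    (h7 : nharm (nharm P Q) R = nharm P (nharm Q R)) :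
    nharm (nharm (z k * P) (z l * Q)) (z m * R) =
      nharm (z k * P) (nharm (z l * Q) (z m * R)) := by
  have hL : nharm (nharm (z k * P) (z l * Q)) (z m * R) =
      z k * nharm (nharm P (z l * Q)) (z m * R) + z l * nharm (nharm (z k * P) Q) (z m * R)
      - z (k + l) * nharm (nharm P Q) (z m * R)
      + z m * nharm (nharm (z k * P) (z l * Q)) R
      - z (k + m) * nharm (nharm P (z l * Q)) R - z (l + m) * nharm (nharm (z k * P) Q) R
      + z (k + l + m) * nharm (nharm P Q) R := by
    rw [nharm_z_z k l hk hl P Q]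
    simp only [nharm_add_left, nharm_sub_left, nharm_z_z k m hk hm, nharm_z_z l m hl hm,
      nharm_z_z (k + l) m (by omega) hm, mul_add, mul_sub]
    abel
  have hR : nharm (z k * P) (nharm (z l * Q) (z m * R)) =
      z k * nharm P (nharm (z l * Q) (z m * R)) + z l * nharm (z k * P) (nharm Q (z m * R))
      - z (k + l) * nharm P (nharm Q (z m * R))
      + z m * nharm (z k * P) (nharm (z l * Q) R)
      - z (k + m) * nharm P (nharm (z l * Q) R) - z (l + m) * nharm (z k * P) (nharm Q R)
      + z (k + l + m) * nharm P (nharm Q R) := by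
    rw [nharm_z_z l m hl hm Q R]
    simp only [nharm_add_right, nharm_sub_right, nharm_z_z k m hk hm, nharm_z_z k l hk hl,
      nharm_z_z k (l + m) hk (by omega), mul_add, mul_sub, ← Nat.add_assoc]
    abel
  rw [hL, hR, h1, h2, h3, h4, h5, h6, h7]

theorem assoc_A (a b c : List ℕ) (ha : ∀ k ∈ a, 1 ≤ k) (hb : ∀ k ∈ b, 1 ≤ k)
    (hc : ∀ k ∈ c, 1 ≤ k) :
    nharm (nharm (word (zListW a)) (word (zListW b))) (word (zListW c)) =
      nharm (word (zListW a)) (nharm (word (zListW b)) (word (zListW c))) := by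
  have h0 : zListW [] = 1 := rfl
  induction a generalizing b c with
  | nil => rw [h0, nharm_one_A b hb, nharm_A b c hb hc, nharm_one_nharmW b c hb hc]
  | cons k a iha =>
    have hk := ha k (by simp)
    have ha' : ∀ j ∈ a, 1 ≤ j := fun j hj => ha j (by simp [hj])
    replace iha := fun b c => iha b c ha'
    induction b generalizing c with
    | nil => rw [h0, nharm_one_A c hc, nharm_comm' _ (word 1), nharm_one_A _ ha]
    | cons l b ihb =>
      have hl := hb l (by simp)
      have hb' : ∀ j ∈ b, 1 ≤ j := fun j hj => hb j (by simp [hj])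
      replace ihb := fun c => ihb c hb'
      induction c with
      | nil =>
        rw [h0, nharm_comm' _ (word 1), nharm_comm' _ (word 1), nharm_one_A _ hb,
          nharm_A _ _ ha hb, nharm_one_nharmW _ _ ha hb]
      | cons m c ihc =>
        have hm := hc m (by simp)
        have hc' : ∀ j ∈ c, 1 ≤ j := fun j hj => hc j (by simp [hj])
        have h1 := iha (l :: b) (m :: c) hb hc
        have h2 := ihb (m :: c) hc
        have h3 := ihc hc'
        have h4 := iha b (m :: c) hb' hc
        have h5 := iha (l :: b) c hb hc'
        have h6 := ihb c hc'
        have h7 := iha b c hb' hc'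
        simp only [word_cons] at *
        exact assoc_step k l m hk hl hm _ _ _ h1 h2 h3 h4 h5 h6 h7

theorem nharm_reduce (u v : FreeMonoid Letter) :
    nharm (word u) (word v) = nharm (word (zListW (toZ u))) (word (zListW (toZ v))) := by
  rw [nharm_word, nharm_A _ _ (toZ_pos u) (toZ_pos v)]

theorem nharm_reduce_left (u : FreeMonoid Letter) (Q : H) :
    nharm (word u) Q = nharm (word (zListW (toZ u))) Q := by
  induction Q using word_induction with
  | hw v => rw [nharm_word, nharm_word, toZ_zListW _ (toZ_pos u)]
  | hadd a b ha hb => rw [nharm_add_right, nharm_add_right, ha, hb]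
  | hsmul r a ha => rw [nharm_smul_right, nharm_smul_right, ha]

theorem nharm_assoc' (P Q R : H) : nharm (nharm P Q) R = nharm P (nharm Q R) := by
  induction P using word_induction with
  | hw u =>
    induction Q using word_induction with
    | hw v =>
      induction R using word_induction with
      | hw w =>
        rw [nharm_reduce u v, nharm_comm' _ (word w), nharm_reduce_left w, nharm_comm' _ (nharm _ _),
          assoc_A _ _ _ (toZ_pos u) (toZ_pos v) (toZ_pos w), nharm_reduce v w,
          nharm_reduce_left u]
      | hadd a b ha hb => simp only [nharm_add_right, ha, hb]
      | hsmul r a ha => simp only [nharm_smul_right, ha]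
    | hadd a b ha hb => simp only [nharm_add_right, nharm_add_left, ha, hb]
    | hsmul r a ha => simp only [nharm_smul_right, nharm_smul_left, ha]
  | hadd a b ha hb => simp only [nharm_add_left, ha, hb]
  | hsmul r a ha => simp only [nharm_smul_left, ha]

end H

open H

/-- The n-harmonic product `*̄` on `H¹` is commutative and associative. -/
theorem nharm_comm_and_assoc :
    (∀ w1 ∈ H1, ∀ w2 ∈ H1, nharm w1 w2 = nharm w2 w1) ∧
    (∀ w1 ∈ H1, ∀ w2 ∈ H1, ∀ w3 ∈ H1,
      nharm (nharm w1 w2) w3 = nharm w1 (nharm w2 w3)) :=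
  ⟨fun w1 _ w2 _ => nharm_comm' w1 w2, fun w1 _ w2 _ w3 _ => nharm_assoc' w1 w2 w3⟩
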